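/- Suppose λ_0, …, λ_{ns−1} are pairwise distinct and satisfy the local constraints. Then the array code C is an (n,k,ℓ) MDS array code: for every subset F = {f_1 < … < f_r} ⊆ {0,…,n−1} of size r, the rℓ × rℓ matrix [H_{f_1} | … | H_{f_r}], where H_{as+b} = A_{a,b}^(r), is invertible; equivalently, any two codewords of C that agree on all coordinates outside F are equal, so any k coordinates of a codeword determine the whole codeword. -/

import Mathlib

open Matrix

/-- The `u`-th digit of `i` in base `s`. -/
def digit (s i u : ℕ) : ℕ := i / s ^ u % s

open scoped Classical in
/-- The `z`-th entry of the `(i,j)` block (a length-`t` column vector, `0 ≤ z < t`) of the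
block matrix `A_{a,b}^{(t)}`; the group size is `g` (`g = s` for the first construction and
`g = s + 1` for the second), so the relevant `λ`-index is `a·s·g + b·s + j_a`. -/
noncomputable def Aent {F : Type*} [Field F] (lam : ℕ → F) (s g a b i j z : ℕ) : F :=
  if i = j then lam (a * s * g + b * s + digit s j a) ^ z
  else if digit s i a = b ∧ digit s j a ≠ b ∧ (∀ u, u ≠ a → digit s i u = digit s j u) then
    -(lam (a * s * g + b * s + digit s j a) ^ z)
  else 0

/-- `A_{a,b}^{(t)}` as an `ℓt × ℓ` matrix; row `ρ` encodes block row `ρ / t` and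
inner row `ρ % t`. -/
noncomputable def Amat {F : Type*} [Field F] (lam : ℕ → F) (s g ℓ a b t : ℕ) :
    Matrix (Fin (ℓ * t)) (Fin ℓ) F :=
  Matrix.of fun ρ j => Aent lam s g a b ((ρ : ℕ) / t) (j : ℕ) ((ρ : ℕ) % t)

/-- The `m`-th smallest element of the finite set `B ⊆ ℕ` (junk value `0` if `m ≥ |B|`). -/
def enum (B : Finset ℕ) (m : ℕ) : ℕ := (B.sort (· ≤ ·)).getD m 0

/-- `A_{a,B}^{(t)} = [A_{a,b₁}^{(t)} | ⋯ | A_{a,b_v}^{(t)}]` as an `ℓt × ℓ|B|` matrix: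
row `ρ` encodes block row `ρ / t` and inner row `ρ % t`; column `κ` selects the
`κ / ℓ`-th member of `B` and inner column `κ % ℓ`. -/
noncomputable def AmatB {F : Type*} [Field F] (lam : ℕ → F) (s g ℓ a t : ℕ) (B : Finset ℕ) :
    Matrix (Fin (ℓ * t)) (Fin (ℓ * B.card)) F :=
  Matrix.of fun ρ κ =>
    Aent lam s g a (enum B ((κ : ℕ) / ℓ)) ((ρ : ℕ) / t) ((κ : ℕ) % ℓ) ((ρ : ℕ) % t)

/-- The local (in-group) constraints: every square matrix `A_{a,B}` (for a group index
`a < groups` and a nonempty `B ⊆ {0, …, g-1}`) is invertible. -/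
def LocalConstraints {F : Type*} [Field F] (lam : ℕ → F) (s g ℓ groups : ℕ) : Prop :=
  ∀ a < groups, ∀ B ⊆ Finset.range g, B.Nonempty → (AmatB lam s g ℓ a B.card B).det ≠ 0

/-- The horizontal concatenation `[H_{f 0} | H_{f 1} | ⋯ | H_{f (r-1)}]` of `r` parity check
matrices (each `H_{a·g+b} = A_{a,b}^{(r)}`, of size `ℓr × ℓ`), as an `ℓr × ℓr` square matrix. -/
noncomputable def Hcat {F : Type*} [Field F] (lam : ℕ → F) (s g ℓ r : ℕ) (f : ℕ → ℕ) :
    Matrix (Fin (ℓ * r)) (Fin (ℓ * r)) F :=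
  Matrix.of fun ρ κ =>
    Aent lam s g (f ((κ : ℕ) / ℓ) / g) (f ((κ : ℕ) / ℓ) % g)
      ((ρ : ℕ) / r) ((κ : ℕ) % ℓ) ((ρ : ℕ) % r)

/-- Membership in the array code: `(C_0, …, C_{n−1})` satisfies the parity check equations
`Σ_{a,b} A_{a,b}^{(r)} · C_{a·g+b} = 0` (node `m = a·g + b`). -/
def InCode {F : Type*} [Field F] (lam : ℕ → F) (s g ℓ r n : ℕ) (C : ℕ → ℕ → F) : Prop :=
  ∀ ρ < ℓ * r, ∑ m ∈ Finset.range n, ∑ j ∈ Finset.range ℓ,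
    Aent lam s g (m / g) (m % g) (ρ / r) j (ρ % r) * C m j = 0

open Polynomial in
lemma aeval_eq_of_comm {K V : Type*} [Field K] [AddCommGroup V] [Module K V]
    (S T : Module.End K V) (h : Commute S T) (u : V) (hu : S u = T u) (p : K[X]) :
    aeval S p u = aeval T p u := by
  have hpow : ∀ i : ℕ, (S ^ i) u = (T ^ i) u := by
    intro i
    induction i with
    | zero => simp
    | succ i ih =>
      rw [pow_succ', Module.End.mul_apply, ih, pow_succ, Module.End.mul_apply, ← hu]
      exact LinearMap.congr_fun (h.pow_right i).eq u
  rw [aeval_eq_sum_range, aeval_eq_sum_range, LinearMap.sum_apply, LinearMap.sum_apply]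
  exact Finset.sum_congr rfl fun i _ => by simp [hpow]

open Polynomial in
lemma eq_zero_of_coprime {K V : Type*} [Field K] [AddCommGroup V] [Module K V]
    (S : Module.End K V) (p q : K[X]) (h : IsCoprime p q) (u : V)
    (hp : aeval S p u = 0) (hq : aeval S q u = 0) : u = 0 := by
  obtain ⟨c, d, hcd⟩ := h
  have := congrArg (fun r => aeval S r u) hcd
  simpa [hp, hq] using this.symm

lemma local_surj {K V β : Type*} [Field K] [AddCommGroup V] [Module K V] [FiniteDimensional K V]
    (B : Finset β) (T : β → Module.End K V)
    (hloc : ∀ y : β → V, (∀ z < B.card, ∑ b ∈ B, (T b ^ z) (y b) = 0) → ∀ b ∈ B, y b = 0)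
    (w : ℕ → V) : ∃ y : β → V, ∀ z < B.card, ∑ b ∈ B, (T b ^ z) (y b) = w z := by
  classical
  let Φ : (B → V) →ₗ[K] (Fin B.card → V) :=
    LinearMap.pi fun z => ∑ b : B, (T b ^ (z : ℕ)) ∘ₗ LinearMap.proj b
  have hΦ : ∀ (y : β → V) (z : Fin B.card),
      Φ (fun b => y b) z = ∑ b ∈ B, (T b ^ (z : ℕ)) (y b) := by
    intro y z
    simp only [Φ, LinearMap.pi_apply, LinearMap.sum_apply, LinearMap.comp_apply,
      LinearMap.proj_apply]
    exact Finset.sum_coe_sort B (fun b => (T b ^ (z : ℕ)) (y b))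
  have hext : ∀ y : B → V, ∃ y' : β → V, y = fun b : B => y' b := by
    intro y
    exact ⟨fun b => if h : b ∈ B then y ⟨b, h⟩ else 0, by ext b; simp⟩
  have hinj : Function.Injective Φ := by
    rw [injective_iff_map_eq_zero]
    intro y hy
    obtain ⟨y', rfl⟩ := hext y
    have := hloc y' (fun z hz => by
      rw [← hΦ y' ⟨z, hz⟩, hy]; rfl)
    ext b
    exact this b b.2
  have hsurj : Function.Surjective Φ := by
    refine (LinearMap.injective_iff_surjective_of_finrank_eq_finrank ?_).mp hinj
    rw [Module.finrank_pi_fintype, Module.finrank_pi_fintype]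
    simp
  obtain ⟨y, hy⟩ := hsurj (fun z => w z)
  obtain ⟨y', rfl⟩ := hext y
  refine ⟨y', fun z hz => ?_⟩
  rw [← hΦ y' ⟨z, hz⟩, hy]

lemma commute_pow_apply {K V : Type*} [Field K] [AddCommGroup V] [Module K V]
    {S T : Module.End K V} (h : Commute S T) (i j : ℕ) (u : V) :
    (S ^ i) ((T ^ j) u) = (T ^ j) ((S ^ i) u) :=
  LinearMap.congr_fun (h.pow_pow i j).eq u

lemma pow_add_app {K V : Type*} [Field K] [AddCommGroup V] [Module K V]
    (S : Module.End K V) (i j : ℕ) (u : V) :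
    (S ^ (i + j)) u = (S ^ i) ((S ^ j) u) := by
  rw [pow_add]; rfl

open Polynomial in
lemma abs_main {K V ι β : Type*} [Field K] [AddCommGroup V] [Module K V] [FiniteDimensional K V]
    (B : ι → Finset β) (T : ι → β → Module.End K V) (p : ι → K[X])
    (hcomm : ∀ a a', a ≠ a' → ∀ b b', Commute (T a b) (T a' b'))
    (hp : ∀ a, ∀ b ∈ B a, aeval (T a b) (p a) = 0)
    (hcop : ∀ a a', a ≠ a' → IsCoprime (p a) (p a'))
    (hloc : ∀ a, ∀ y : β → V, (∀ z < (B a).card, ∑ b ∈ B a, (T a b ^ z) (y b) = 0) →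
      ∀ b ∈ B a, y b = 0)
    (A : Finset ι) : ∀ y : ι → β → V,
      (∀ z < ∑ a ∈ A, (B a).card, ∑ a ∈ A, ∑ b ∈ B a, (T a b ^ z) (y a b) = 0) →
      ∀ a ∈ A, ∀ b ∈ B a, y a b = 0 := by
  classical
  induction A using Finset.induction_on with
  | empty => simp
  | insert a A ha ih =>
    intro y hy
    simp only [Finset.sum_insert ha] at hy
    have hne : ∀ a' ∈ A, a' ≠ a := fun a' h h' => ha (h' ▸ h)
    choose u hu using fun (a' : ι) (b' : β) =>
      local_surj (B a) (T a) (hloc a) (fun z => (T a' b' ^ z) (y a' b'))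
    set v := (B a).card with hv
    have key : ∀ z < ∑ a ∈ A, (B a).card, ∀ b ∈ B a,
        (∑ a' ∈ A, ∑ b' ∈ B a', (T a' b' ^ z) (u a' b' b)) + (T a b ^ z) (y a b) = 0 := by
      intro z hz
      apply hloc a
      intro i hi
      have h1 := hy (i + z) (by omega)
      rw [← h1, add_comm (∑ b ∈ B a, (T a b ^ (i + z)) (y a b))]
      simp only [map_add, Finset.sum_add_distrib, map_sum]
      congr 1
      · rw [Finset.sum_comm]
        refine Finset.sum_congr rfl fun a' ha' => ?_
        rw [Finset.sum_comm]
        refine Finset.sum_congr rfl fun b' _ => ?_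
        rw [add_comm i z, pow_add_app, ← hu a' b' i hi, map_sum]
        exact Finset.sum_congr rfl fun b _ =>
          commute_pow_apply (hcomm a a' (hne a' ha').symm b b') _ _ _
      · exact Finset.sum_congr rfl fun b _ => (pow_add_app _ _ _ _).symm
    have hrho := ih (fun a' b' => (T a' b' ^ v) (y a' b') - ∑ b ∈ B a, (T a b ^ v) (u a' b' b)) (by
      intro z hz
      have h1 := hy (v + z) (by omega)
      have h2 : ∑ b ∈ B a, (T a b ^ (v + z)) (y a b)
          = - ∑ a' ∈ A, ∑ b' ∈ B a', (T a' b' ^ z) (∑ b ∈ B a, (T a b ^ v) (u a' b' b)) := by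
        rw [eq_neg_iff_add_eq_zero]
        have h3 : ∑ b ∈ B a, (T a b ^ v) ((∑ a' ∈ A, ∑ b' ∈ B a', (T a' b' ^ z) (u a' b' b))
            + (T a b ^ z) (y a b)) = 0 :=
          Finset.sum_eq_zero fun b hb => by rw [key z hz b hb, map_zero]
        rw [← h3, add_comm]
        simp only [map_add, Finset.sum_add_distrib, map_sum]
        congr 1
        · symm
          rw [Finset.sum_comm]
          refine Finset.sum_congr rfl fun a' ha' => ?_
          rw [Finset.sum_comm]
          refine Finset.sum_congr rfl fun b' _ => ?_
          exact Finset.sum_congr rfl fun b _ =>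
            commute_pow_apply (hcomm a a' (hne a' ha').symm b b') _ _ _
        · exact Finset.sum_congr rfl fun b _ => (pow_add_app _ _ _ _)
      rw [h2, neg_add_eq_zero] at h1
      simp only [map_sub, Finset.sum_sub_distrib]
      rw [h1, sub_eq_zero]
      refine Finset.sum_congr rfl fun a' ha' => Finset.sum_congr rfl fun b' _ => ?_
      rw [add_comm, pow_add_app])
    have hA : ∀ a' ∈ A, ∀ b' ∈ B a', y a' b' = 0 := by
      intro a' ha' b' hb'
      have hr := hrho a' ha' b' hb'
      rw [sub_eq_zero] at hr
      have hle : ∀ z ≤ v, ∑ b ∈ B a, (T a b ^ z) (u a' b' b) = (T a' b' ^ z) (y a' b') := by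
        intro z hz
        rcases hz.lt_or_eq with h | h
        · exact hu a' b' z h
        · rw [h]; exact hr.symm
      have h1 := hloc a (fun b => T a' b' (u a' b' b) - T a b (u a' b' b)) (by
        intro z hz
        simp only [map_sub, Finset.sum_sub_distrib]
        rw [sub_eq_zero]
        have e1 : ∑ b ∈ B a, (T a b ^ z) (T a b (u a' b' b))
            = ∑ b ∈ B a, (T a b ^ (z + 1)) (u a' b' b) :=
          Finset.sum_congr rfl fun b _ => by rw [pow_add_app, pow_one]
        have e2 : ∑ b ∈ B a, (T a b ^ z) (T a' b' (u a' b' b))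
            = T a' b' (∑ b ∈ B a, (T a b ^ z) (u a' b' b)) := by
          rw [map_sum]
          refine Finset.sum_congr rfl fun b _ => ?_
          simpa using commute_pow_apply (hcomm a a' (hne a' ha').symm b b') z 1 (u a' b' b)
        rw [e1, e2, hle z hz.le, hle (z + 1) hz, add_comm, pow_add_app, pow_one])
      have h2 : ∀ b ∈ B a, u a' b' b = 0 := by
        intro b hb
        apply eq_zero_of_coprime (T a' b') (p a) (p a') (hcop a a' (hne a' ha').symm)
        · rw [aeval_eq_of_comm (T a' b') (T a b) (hcomm a' a (hne a' ha') b' b) _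
            (sub_eq_zero.mp (h1 b hb)), hp a b hb]; rfl
        · rw [hp a' b' hb']; rfl
      have h3 := hle 0 (Nat.zero_le _)
      simp only [pow_zero, Module.End.one_apply] at h3
      rw [← h3]
      exact Finset.sum_eq_zero h2
    intro a' ha'
    rcases Finset.mem_insert.mp ha' with rfl | h
    · apply hloc a'
      intro z hz
      have := hy z (by omega)
      rwa [Finset.sum_eq_zero (s := A), add_zero] at this
      intro a'' h''
      exact Finset.sum_eq_zero fun b hb => by rw [hA a'' h'' b hb, map_zero]
    · exact hA a' h

/-- The nilpotent part of the kernel operator. -/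
noncomputable def opE {F : Type*} [Field F] {s m : ℕ} (a : Fin m) (b : ℕ) :
    Module.End F ((Fin m → Fin s) → F) where
  toFun x := fun f => if (f a : ℕ) = b then
    ∑ c ∈ Finset.univ.filter (fun c : Fin s => (c : ℕ) ≠ b), x (Function.update f a c) else 0
  map_add' x y := by
    ext f; simp only [Pi.add_apply]; split_ifs <;> simp [Finset.sum_add_distrib]
  map_smul' c x := by
    ext f; simp only [Pi.smul_apply, smul_eq_mul, RingHom.id_apply]
    split_ifs <;> simp [Finset.mul_sum]

/-- The diagonal part of the kernel operator. -/
noncomputable def opD {F : Type*} [Field F] {s m : ℕ} (lam : ℕ → F) (a : Fin m) (b : ℕ) :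
    Module.End F ((Fin m → Fin s) → F) where
  toFun x := fun f => lam (a * s * s + b * s + f a) * x f
  map_add' x y := by ext f; simp [mul_add]
  map_smul' c x := by ext f; simp; ring

lemma opE_apply {F : Type*} [Field F] {s m : ℕ} (a : Fin m) (b : ℕ)
    (x : (Fin m → Fin s) → F) (f : Fin m → Fin s) : opE a b x f = if (f a : ℕ) = b then
    ∑ c ∈ Finset.univ.filter (fun c : Fin s => (c : ℕ) ≠ b), x (Function.update f a c) else 0 :=
  rfl

lemma opD_apply {F : Type*} [Field F] {s m : ℕ} (lam : ℕ → F) (a : Fin m) (b : ℕ)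
    (x : (Fin m → Fin s) → F) (f : Fin m → Fin s) :
    opD lam a b x f = lam (a * s * s + b * s + f a) * x f := rfl

lemma opD_pow_apply {F : Type*} [Field F] {s m : ℕ} (lam : ℕ → F) (a : Fin m) (b z : ℕ)
    (x : (Fin m → Fin s) → F) (f : Fin m → Fin s) :
    (opD lam a b ^ z) x f = lam (a * s * s + b * s + f a) ^ z * x f := by
  induction z with
  | zero => simp
  | succ z ih => rw [pow_succ', Module.End.mul_apply, opD_apply, ih, pow_succ']; ring

lemma opE_sq {F : Type*} [Field F] {s m : ℕ} (a : Fin m) (b : ℕ) :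
    (opE a b : Module.End F ((Fin m → Fin s) → F)) * opE a b = 0 := by
  apply LinearMap.ext
  intro x
  funext f
  rw [Module.End.mul_apply, opE_apply]
  simp only [LinearMap.zero_apply, Pi.zero_apply]
  split_ifs
  · refine Finset.sum_eq_zero fun c hc => ?_
    rw [opE_apply, if_neg]
    simpa using hc
  · rfl

lemma opE_comm {F : Type*} [Field F] {s m : ℕ} {a a' : Fin m} (h : a ≠ a') (b b' : ℕ) :
    Commute (opE a b : Module.End F ((Fin m → Fin s) → F)) (opE a' b') := by
  apply LinearMap.ext
  intro x
  funext f
  simp only [Module.End.mul_apply, opE_apply, Function.update_of_ne h, Function.update_of_ne h.symm]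
  split_ifs
  · rw [Finset.sum_comm]
    refine Finset.sum_congr rfl fun c _ => Finset.sum_congr rfl fun c' _ => ?_
    rw [Function.update_comm h]
  all_goals simp

lemma opE_opD_comm {F : Type*} [Field F] {s m : ℕ} (lam : ℕ → F) {a a' : Fin m} (h : a ≠ a')
    (b b' : ℕ) :
    Commute (opE a b : Module.End F ((Fin m → Fin s) → F)) (opD lam a' b') := by
  apply LinearMap.ext
  intro x
  funext f
  simp only [Module.End.mul_apply, opE_apply, opD_apply, Function.update_of_ne h.symm]
  split_ifs
  · rw [Finset.mul_sum]
  · simp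

lemma opD_comm {F : Type*} [Field F] {s m : ℕ} (lam : ℕ → F) (a a' : Fin m)
    (b b' : ℕ) :
    Commute (opD lam a b : Module.End F ((Fin m → Fin s) → F)) (opD lam a' b') := by
  apply LinearMap.ext
  intro x
  funext f
  simp only [Module.End.mul_apply, opD_apply]
  ring

/-- The conjugated operator. -/
noncomputable def opT {F : Type*} [Field F] {s m : ℕ} (lam : ℕ → F) (a : Fin m) (b : ℕ) :
    Module.End F ((Fin m → Fin s) → F) := (1 - opE a b) * opD lam a b * (1 + opE a b)

lemma opE_inv {F : Type*} [Field F] {s m : ℕ} (a : Fin m) (b : ℕ) :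
    (1 + opE a b : Module.End F ((Fin m → Fin s) → F)) * (1 - opE a b) = 1 := by
  have := opE_sq (F := F) (s := s) a b
  rw [add_mul, mul_sub, mul_sub, this]; simp

lemma opE_inv2 {F : Type*} [Field F] {s m : ℕ} (a : Fin m) (b : ℕ) :
    (1 - opE a b : Module.End F ((Fin m → Fin s) → F)) * (1 + opE a b) = 1 := by
  have := opE_sq (F := F) (s := s) a b
  rw [sub_mul, mul_add, mul_add, this]; simp

lemma opT_comm {F : Type*} [Field F] {s m : ℕ} (lam : ℕ → F) {a a' : Fin m} (h : a ≠ a')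
    (b b' : ℕ) :
    Commute (opT lam a b : Module.End F ((Fin m → Fin s) → F)) (opT lam a' b') := by
  have h1 := opE_comm (F := F) (s := s) h b b'
  have h2 := opE_opD_comm (s := s) lam h b b'
  have h3 := (opE_opD_comm (s := s) lam h.symm b' b).symm
  have h4 := opD_comm (s := s) lam a a' b b'
  have one := fun x : Module.End F ((Fin m → Fin s) → F) => Commute.one_right x
  have one' := fun x : Module.End F ((Fin m → Fin s) → F) => Commute.one_left x
  have k1 : ∀ X : Module.End F ((Fin m → Fin s) → F), Commute X (opE a' b') →
      Commute X (opD lam a' b') → Commute X (opT lam a' b') := fun X hE hD =>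
    (((one X).sub_right hE).mul_right hD).mul_right ((one X).add_right hE)
  have kE := k1 _ h1 h2
  have kD := k1 _ h3 h4
  exact (((one' _).sub_left kE).mul_left kD).mul_left ((one' _).add_left kE)

lemma opT_pow {F : Type*} [Field F] {s m : ℕ} (lam : ℕ → F) (a : Fin m) (b z : ℕ) :
    (opT lam a b : Module.End F ((Fin m → Fin s) → F)) ^ z =
      (1 - opE a b) * opD lam a b ^ z * (1 + opE a b) := by
  induction z with
  | zero => simp [opE_inv2]
  | succ z ih =>
    rw [pow_succ, ih, opT, pow_succ]
    have := opE_inv (F := F) (s := s) a b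
    calc _ = (1 - opE a b) * opD lam a b ^ z * ((1 + opE a b) * (1 - opE a b)) * opD lam a b
          * (1 + opE a b) := by simp only [mul_assoc]
      _ = _ := by rw [this]; simp only [mul_assoc, one_mul]

open Polynomial in
lemma opT_aeval {F : Type*} [Field F] {s m : ℕ} (lam : ℕ → F) (a : Fin m) (b : ℕ) (p : F[X]) :
    aeval (opT lam a b : Module.End F ((Fin m → Fin s) → F)) p =
      (1 - opE a b) * aeval (opD lam a b) p * (1 + opE a b) := by
  rw [aeval_eq_sum_range, aeval_eq_sum_range, Finset.mul_sum, Finset.sum_mul]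
  exact Finset.sum_congr rfl fun i _ => by rw [opT_pow]; simp

open Polynomial in
lemma opD_aeval {F : Type*} [Field F] {s m : ℕ} (lam : ℕ → F) (a : Fin m) (b : ℕ) (p : F[X])
    (x : (Fin m → Fin s) → F) (f : Fin m → Fin s) :
    aeval (opD lam a b) p x f = p.eval (lam (a * s * s + b * s + f a)) * x f := by
  rw [aeval_eq_sum_range, eval_eq_sum_range, LinearMap.sum_apply, Finset.sum_apply, Finset.sum_mul]
  refine Finset.sum_congr rfl fun i _ => ?_
  rw [LinearMap.smul_apply, Pi.smul_apply, opD_pow_apply, smul_eq_mul]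
  ring

open Polynomial in
/-- The polynomial whose roots are all the elements of group `a`. -/
noncomputable def grpPoly {F : Type*} [Field F] (s : ℕ) (lam : ℕ → F) (a : ℕ) : F[X] :=
  ∏ i ∈ Finset.range (s * s), (X - C (lam (a * s * s + i)))

lemma grp_lt {s b c : ℕ} (hb : b < s) (hc : c < s) : b * s + c < s * s := by
  calc b * s + c < b * s + s := by omega
    _ = (b + 1) * s := by ring
    _ ≤ s * s := Nat.mul_le_mul_right _ hb

open Polynomial in
lemma opT_grp {F : Type*} [Field F] {s m : ℕ} (lam : ℕ → F) (a : Fin m) (b : ℕ) (hb : b < s) :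
    aeval (opT lam a b : Module.End F ((Fin m → Fin s) → F)) (grpPoly s lam a) = 0 := by
  rw [opT_aeval]
  have : aeval (opD lam a b : Module.End F ((Fin m → Fin s) → F)) (grpPoly s lam a) = 0 := by
    apply LinearMap.ext
    intro x
    funext f
    rw [opD_aeval, grpPoly, eval_prod, Finset.prod_eq_zero (i := b * s + f a)]
    · simp
    · exact Finset.mem_range.mpr (grp_lt hb (f a).2)
    · simp [add_assoc]
  rw [this]; simp

lemma idx_lt {a m i s : ℕ} (ha : a < m) (hi : i < s * s) : a * s * s + i < m * s * s := by
  calc a * s * s + i < a * s * s + s * s := by omega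
    _ = (a + 1) * (s * s) := by ring
    _ ≤ m * (s * s) := Nat.mul_le_mul_right _ ha
    _ = _ := by ring

lemma grp_coprime {F : Type*} [Field F] {s m : ℕ} (lam : ℕ → F)
    (hdist : ∀ i < m * s * s, ∀ j < m * s * s, lam i = lam j → i = j)
    {a a' : Fin m} (h : a ≠ a') : IsCoprime (grpPoly s lam a) (grpPoly s lam a') := by
  refine IsCoprime.prod_left fun i hi => IsCoprime.prod_right fun j hj => ?_
  rw [Finset.mem_range] at hi hj
  apply Polynomial.isCoprime_X_sub_C_of_isUnit_sub
  rw [isUnit_iff_ne_zero, sub_ne_zero]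
  intro e
  have := hdist _ (idx_lt a.2 hi) _ (idx_lt a'.2 hj) e
  have h0 : 0 < s * s := by omega
  apply h
  ext
  have h1 : (a * s * s + i) / (s * s) = (a : ℕ) := by
    rw [mul_assoc, mul_comm, Nat.mul_add_div h0, Nat.div_eq_of_lt hi, add_zero]
  have h2 : (a' * s * s + j) / (s * s) = (a' : ℕ) := by
    rw [mul_assoc, mul_comm, Nat.mul_add_div h0, Nat.div_eq_of_lt hj, add_zero]
  rw [← h1, this, h2]

lemma digit_equiv {s m : ℕ} (f : Fin m → Fin s) (a : Fin m) :
    digit s (finFunctionFinEquiv f : ℕ) a = f a := by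
  have h := congrFun (finFunctionFinEquiv.symm_apply_apply f) a
  have h' := congrArg Fin.val h
  exact h'

lemma digit_big {s m i u : ℕ} (hs : 0 < s) (hi : i < s ^ m) (hu : m ≤ u) : digit s i u = 0 := by
  rw [digit, Nat.div_eq_of_lt (lt_of_lt_of_le hi (Nat.pow_le_pow_right hs hu)), Nat.zero_mod]

lemma Aent_equiv {F : Type*} [Field F] {s m : ℕ} (hs : 0 < s) (lam : ℕ → F) (a : Fin m) (b z : ℕ)
    (f g : Fin m → Fin s) :
    Aent lam s s a b (finFunctionFinEquiv f : ℕ) (finFunctionFinEquiv g : ℕ) z =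
      (if f = g then lam (a * s * s + b * s + g a) ^ z else 0) -
      (if (f a : ℕ) = b ∧ (g a : ℕ) ≠ b ∧ ∀ u, u ≠ a → f u = g u
        then lam (a * s * s + b * s + g a) ^ z else 0) := by
  classical
  have h1 : ((finFunctionFinEquiv f : ℕ) = (finFunctionFinEquiv g : ℕ)) ↔ f = g := by
    rw [← Fin.ext_iff]; exact finFunctionFinEquiv.injective.eq_iff
  have h2 : (∀ u, u ≠ (a : ℕ) → digit s (finFunctionFinEquiv f : ℕ) u
      = digit s (finFunctionFinEquiv g : ℕ) u) ↔ ∀ u, u ≠ a → f u = g u := by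
    constructor
    · intro h u hu
      have := h u (fun e => hu (Fin.ext e))
      rw [digit_equiv, digit_equiv] at this
      exact Fin.ext this
    · intro h u hu
      by_cases hm : u < m
      · have := h ⟨u, hm⟩ (fun e => hu (congrArg Fin.val e))
        have e1 := digit_equiv f ⟨u, hm⟩
        have e2 := digit_equiv g ⟨u, hm⟩
        simp only at e1 e2
        rw [e1, e2, this]
      · rw [digit_big hs (Fin.is_lt _) (not_lt.mp hm), digit_big hs (Fin.is_lt _) (not_lt.mp hm)]
  unfold Aent
  simp only [h1, h2, digit_equiv]
  by_cases hfg : f = g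
  · subst hfg
    simp
  · simp only [hfg, if_false, zero_sub]
    split_ifs <;> simp

lemma key_sum {F : Type*} [Field F] {s m : ℕ} (hs : 0 < s) (lam : ℕ → F) (a : Fin m) (b z : ℕ)
    (f : Fin m → Fin s) (X : ℕ → F) :
    ∑ j ∈ Finset.range (s ^ m), Aent lam s s a b (finFunctionFinEquiv f : ℕ) j z * X j =
      ((1 - opE a b : Module.End F ((Fin m → Fin s) → F)) ((opD lam a b ^ z) (fun g : Fin m → Fin s =>
        X (finFunctionFinEquiv g : ℕ)))) f := by
  classical
  rw [Finset.sum_range (fun j => Aent lam s s a b (finFunctionFinEquiv f : ℕ) j z * X j),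
    ← Equiv.sum_comp finFunctionFinEquiv]
  simp only [Aent_equiv hs, sub_mul, Finset.sum_sub_distrib, ite_mul, zero_mul,
    Finset.sum_ite_eq, Finset.mem_univ, if_true]
  rw [LinearMap.sub_apply, Pi.sub_apply, Module.End.one_apply, opD_pow_apply, opE_apply]
  congr 1
  by_cases hf : (f a : ℕ) = b
  · simp only [hf, true_and, if_true]
    rw [← Finset.sum_filter]
    symm
    refine Finset.sum_nbij' (fun c => Function.update f a c) (fun g => g a) ?_ ?_ ?_ ?_ ?_
    · intro c hc
      simp only [Finset.mem_filter, Finset.mem_univ, true_and] at hc ⊢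
      refine ⟨by simpa using hc, fun u hu => by rw [Function.update_of_ne hu]⟩
    · intro g hg
      simp only [Finset.mem_filter, Finset.mem_univ, true_and] at hg ⊢
      exact hg.1
    · intro c _; simp
    · intro g hg
      simp only [Finset.mem_filter, Finset.mem_univ, true_and] at hg
      funext u
      by_cases hu : u = a
      · subst hu; simp
      · rw [Function.update_of_ne hu, hg.2 u hu]
    · intro c _
      rw [opD_pow_apply]
  · simp [hf]

lemma enum_sum {M : Type*} [AddCommMonoid M] (B : Finset ℕ) (h : ℕ → M) :
    ∑ i ∈ Finset.range B.card, h (enum B i) = ∑ b ∈ B, h b := by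
  have hl : (B.sort (· ≤ ·)).length = B.card := Finset.length_sort _
  rw [Finset.sum_range]
  have h1 : ∑ b ∈ B, h b = ((B.sort (· ≤ ·)).map h).sum := by
    rw [← List.sum_toFinset _ (Finset.sort_nodup _ _), Finset.sort_toFinset]
  rw [h1, ← Fin.sum_univ_getElem]
  refine Fintype.sum_equiv (finCongr (by simp [hl])) _ _ fun i => ?_
  have : (i : ℕ) < (B.sort (· ≤ ·)).length := by rw [hl]; exact i.2
  simp [enum, List.getD_eq_getElem?_getD, List.getElem?_eq_getElem this]

lemma enum_mem {B : Finset ℕ} {i : ℕ} (hi : i < B.card) : enum B i ∈ B := by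
  have : i < (B.sort (· ≤ ·)).length := by rwa [Finset.length_sort]
  rw [enum, List.getD_eq_getElem?_getD, List.getElem?_eq_getElem this]
  exact (Finset.mem_sort _).mp (List.getElem_mem this)

lemma exists_enum {B : Finset ℕ} {b : ℕ} (hb : b ∈ B) : ∃ i < B.card, enum B i = b := by
  obtain ⟨i, hi, e⟩ := List.getElem_of_mem ((Finset.mem_sort (· ≤ ·)).mpr hb)
  refine ⟨i, by rwa [Finset.length_sort] at hi, ?_⟩
  rw [enum, List.getD_eq_getElem?_getD, List.getElem?_eq_getElem hi]
  exact e

lemma enum_inj {B : Finset ℕ} {i j : ℕ} (hi : i < B.card) (hj : j < B.card)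
    (h : enum B i = enum B j) : i = j := by
  have hi' : i < (B.sort (· ≤ ·)).length := by rwa [Finset.length_sort]
  have hj' : j < (B.sort (· ≤ ·)).length := by rwa [Finset.length_sort]
  simp only [enum, List.getD_eq_getElem?_getD, List.getElem?_eq_getElem hi',
    List.getElem?_eq_getElem hj', Option.getD_some] at h
  exact (Finset.sort_nodup B (· ≤ ·)).getElem_inj_iff.mp h

lemma sum_divmod {M : Type*} [AddCommMonoid M] (l v : ℕ) (hl : 0 < l) (h : ℕ → ℕ → M) :
    ∑ κ : Fin (l * v), h ((κ : ℕ) / l) ((κ : ℕ) % l) =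
      ∑ i ∈ Finset.range v, ∑ j ∈ Finset.range l, h i j := by
  rw [Finset.sum_range]
  simp only [Finset.sum_range]
  rw [← Fintype.sum_prod_type' (f := fun (i : Fin v) (j : Fin l) => h i j)]
  symm
  refine Fintype.sum_equiv (finProdFinEquiv.trans (finCongr (mul_comm v l))) _ _ fun x => ?_
  obtain ⟨i, j⟩ := x
  simp [Nat.add_mul_div_left _ _ hl, Nat.div_eq_of_lt j.2, Nat.mod_eq_of_lt j.2]

lemma det_iff {F : Type*} [Field F] (l : ℕ) (hl : 0 < l) (B : Finset ℕ)
    (G : ℕ → ℕ → ℕ → ℕ → F) :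
    (Matrix.of fun (ρ κ : Fin (l * B.card)) =>
      G (enum B ((κ : ℕ) / l)) ((ρ : ℕ) / B.card) ((κ : ℕ) % l) ((ρ : ℕ) % B.card)).det ≠ 0 ↔
    ∀ x : ℕ → ℕ → F, (∀ i < l, ∀ z < B.card,
      ∑ b ∈ B, ∑ j ∈ Finset.range l, G b i j z * x b j = 0) → ∀ b ∈ B, ∀ j < l, x b j = 0 := by
  have bound : ∀ {i z}, i < l → z < B.card → i * B.card + z < l * B.card := by
    intro i z hi hz
    calc i * B.card + z < i * B.card + B.card := by omega
      _ = (i + 1) * B.card := by ring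
      _ ≤ _ := Nat.mul_le_mul_right _ hi
  have bound' : ∀ {i j}, i < B.card → j < l → l * i + j < l * B.card := by
    intro i z hi hz
    calc l * i + z < l * i + l := by omega
      _ = l * (i + 1) := by ring
      _ ≤ _ := Nat.mul_le_mul_left _ hi
  rw [Ne, ← Matrix.exists_mulVec_eq_zero_iff, not_exists]
  constructor
  · intro H x hx b hb j hj
    obtain ⟨q, hq, rfl⟩ := exists_enum hb
    by_contra hne
    apply H (fun κ => x (enum B ((κ : ℕ) / l)) ((κ : ℕ) % l))
    refine ⟨fun h0 => hne ?_, ?_⟩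
    · have := congrFun h0 ⟨l * q + j, bound' hq hj⟩
      simpa [Nat.mul_add_div hl, Nat.div_eq_of_lt hj, Nat.mod_eq_of_lt hj] using this
    · funext ρ
      have hpos : 0 < B.card := by omega
      have h1 := hx ((ρ : ℕ) / B.card) (Nat.div_lt_of_lt_mul (lt_of_lt_of_eq ρ.2 (mul_comm _ _)))
        ((ρ : ℕ) % B.card) (Nat.mod_lt _ hpos)
      rw [← enum_sum B (fun b => ∑ j ∈ Finset.range l, G b ((ρ : ℕ) / B.card) j
        ((ρ : ℕ) % B.card) * x b j)] at h1
      rw [← sum_divmod l B.card hl (fun i j => G (enum B i) ((ρ : ℕ) / B.card) j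
        ((ρ : ℕ) % B.card) * x (enum B i) j)] at h1
      exact h1
  · rintro H w ⟨hw, hM⟩
    apply hw
    classical
    choose! idx hidx hidx' using fun b (hb : b ∈ B) => exists_enum hb
    let x : ℕ → ℕ → F := fun b j =>
      if h : l * idx b + j < l * B.card then w ⟨l * idx b + j, h⟩ else 0
    have hxw : ∀ κ : Fin (l * B.card), x (enum B ((κ : ℕ) / l)) ((κ : ℕ) % l) = w κ := by
      intro κ
      have hlt : (κ : ℕ) / l < B.card := Nat.div_lt_of_lt_mul κ.2
      have : idx (enum B ((κ : ℕ) / l)) = (κ : ℕ) / l :=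
        enum_inj (hidx _ (enum_mem hlt)) hlt (hidx' _ (enum_mem hlt))
      simp only [x, this, Nat.div_add_mod, κ.2, dif_pos]
    have hz := H x (by
      intro i hi z hz
      have h1 := congrFun hM ⟨i * B.card + z, bound hi hz⟩
      have hpos : 0 < B.card := by omega
      rw [← enum_sum B (fun b => ∑ j ∈ Finset.range l, G b i j z * x b j),
        ← sum_divmod l B.card hl (fun q j => G (enum B q) i j z * x (enum B q) j)]
      rw [← show _ = (0 : F) from h1]
      refine Finset.sum_congr rfl fun κ _ => ?_
      rw [hxw]
      have e1 : (i * B.card + z) / B.card = i := by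
        rw [mul_comm, Nat.mul_add_div hpos, Nat.div_eq_of_lt hz, add_zero]
      have e2 : (i * B.card + z) % B.card = z := by
        rw [mul_comm, Nat.mul_add_mod, Nat.mod_eq_of_lt hz]
      simp only [Matrix.of_apply, e1, e2])
    funext κ
    rw [← hxw κ]
    exact hz _ (enum_mem (Nat.div_lt_of_lt_mul κ.2)) _ (Nat.mod_lt _ hl)

lemma sum_groups {M : Type*} [AddCommMonoid M] {s m : ℕ} (hs : 0 < s) (Fs : Finset ℕ)
    (hFs : Fs ⊆ Finset.range (m * s)) (h : ℕ → M) :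
    ∑ q ∈ Fs, h q = ∑ a : Fin m, ∑ b ∈ (Finset.range s).filter (fun b => (a : ℕ) * s + b ∈ Fs),
      h ((a : ℕ) * s + b) := by
  rw [Finset.sum_sigma']
  symm
  refine Finset.sum_bij (fun p _ => (p.1 : ℕ) * s + p.2) ?_ ?_ ?_ ?_
  · rintro ⟨a, b⟩ hp
    simp only [Finset.mem_sigma, Finset.mem_filter] at hp
    exact hp.2.2
  · rintro ⟨a, b⟩ hp ⟨a', b'⟩ hp' e
    simp only [Finset.mem_sigma, Finset.mem_filter, Finset.mem_range] at hp hp' e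
    have e1 := congrArg (· / s) e
    have e2 := congrArg (· % s) e
    simp only [mul_comm _ s, Nat.mul_add_div hs, Nat.mul_add_mod, Nat.div_eq_of_lt hp.2.1,
      Nat.div_eq_of_lt hp'.2.1, Nat.mod_eq_of_lt hp.2.1, Nat.mod_eq_of_lt hp'.2.1,
      add_zero] at e1 e2
    obtain rfl := Fin.ext e1
    subst e2
    rfl
  · intro q hq
    have := Finset.mem_range.mp (hFs hq)
    refine ⟨⟨⟨q / s, Nat.div_lt_of_lt_mul (by rwa [mul_comm])⟩, q % s⟩, ?_, ?_⟩
    · simp only [Finset.mem_sigma, Finset.mem_univ, Finset.mem_filter, Finset.mem_range,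
        true_and]
      exact ⟨Nat.mod_lt _ hs, by rwa [Nat.div_add_mod']⟩
    · exact Nat.div_add_mod' q s
  · intros; rfl

lemma inj_main {F : Type*} [Field F] {s m : ℕ} (hs : 0 < s) (lam : ℕ → F)
    (hdist : ∀ i < m * s * s, ∀ j < m * s * s, lam i = lam j → i = j)
    (hloc : LocalConstraints lam s s (s ^ m) m) (Fs : Finset ℕ) (hFs : Fs ⊆ Finset.range (m * s))
    (x : ℕ → ℕ → F)
    (hx : ∀ i < s ^ m, ∀ z < Fs.card, ∑ q ∈ Fs, ∑ j ∈ Finset.range (s ^ m),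
      Aent lam s s (q / s) (q % s) i j z * x q j = 0) :
    ∀ q ∈ Fs, ∀ j < s ^ m, x q j = 0 := by
  classical
  have hl : 0 < s ^ m := Nat.pow_pos hs
  let B : Fin m → Finset ℕ := fun a => (Finset.range s).filter fun b => (a : ℕ) * s + b ∈ Fs
  have hcard : ∑ a : Fin m, (B a).card = Fs.card := by
    rw [Finset.card_eq_sum_ones, sum_groups hs Fs hFs (fun _ => 1)]
    simp [B]
  have hBlt : ∀ a, ∀ b ∈ B a, b < s := fun a b hb =>
    Finset.mem_range.mp (Finset.mem_filter.mp hb).1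
  have hTapp : ∀ (a : Fin m) (b z : ℕ) (X : ℕ → F) (f : Fin m → Fin s),
      (opT lam a b ^ z) ((1 - opE a b : Module.End F ((Fin m → Fin s) → F)) (fun g : Fin m → Fin s => X (finFunctionFinEquiv g : ℕ))) f
      = ∑ j ∈ Finset.range (s ^ m), Aent lam s s a b (finFunctionFinEquiv f : ℕ) j z * X j := by
    intro a b z X f
    rw [key_sum hs, opT_pow]
    have : ((1 - opE a b) * opD lam a b ^ z * (1 + opE a b)) * (1 - opE a b)
        = (1 - opE a b) * (opD lam a b ^ z : Module.End F ((Fin m → Fin s) → F)) := by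
      rw [mul_assoc, opE_inv, mul_one]
    rw [← Module.End.mul_apply, this, Module.End.mul_apply]
  -- every vector comes from a natural-number-indexed one
  have hrep : ∀ y : (Fin m → Fin s) → F, ∃ X : ℕ → F,
      y = (fun g : Fin m → Fin s => X (finFunctionFinEquiv g : ℕ)) := by
    intro y
    refine ⟨fun j => if h : j < s ^ m then y (finFunctionFinEquiv.symm ⟨j, h⟩) else 0, ?_⟩
    funext g
    simp only [Fin.is_lt, dif_pos, Fin.eta, Equiv.symm_apply_apply]
  have hmain := abs_main B (fun a b => (opT lam a b : Module.End F ((Fin m → Fin s) → F)))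
    (fun a => grpPoly s lam a) (fun a a' h b b' => opT_comm lam h b b')
    (fun a b hb => opT_grp lam a b (hBlt a b hb)) (fun a a' h => grp_coprime lam hdist h)
    (by
      intro a y hy b hb
      have hd := hloc a a.2 (B a) (Finset.filter_subset _ _) ⟨b, hb⟩
      have hd' := (det_iff (s ^ m) hl (B a) (fun b i j z => Aent lam s s a b i j z)).mp hd
      choose X hX using fun b => hrep ((1 + opE a b : Module.End F ((Fin m → Fin s) → F)) (y b))
      have hyX : ∀ b, y b = (1 - opE a b : Module.End F ((Fin m → Fin s) → F)) (fun g : Fin m → Fin s =>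
          X b (finFunctionFinEquiv g : ℕ)) := by
        intro b
        rw [← hX b, ← Module.End.mul_apply, opE_inv2, Module.End.one_apply]
      have h0 := hd' X (by
        intro i hi z hz
        have h1 := congrFun (hy z hz) (finFunctionFinEquiv.symm ⟨i, hi⟩)
        rw [Finset.sum_apply, Pi.zero_apply] at h1
        rw [← h1]
        refine Finset.sum_congr rfl fun b _ => ?_
        rw [hyX b, hTapp, Equiv.apply_symm_apply])
      rw [hyX b]
      have : (fun g : Fin m → Fin s => X b (finFunctionFinEquiv g : ℕ)) = 0 := by
        funext g
        exact h0 b hb _ (Fin.is_lt _)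
      rw [this, map_zero])
    Finset.univ
    (fun a b => (1 - opE a b : Module.End F ((Fin m → Fin s) → F)) (fun g : Fin m → Fin s =>
      x ((a : ℕ) * s + b) (finFunctionFinEquiv g : ℕ)))
    (by
      intro z hz
      rw [hcard] at hz
      funext f
      have h1 := hx (finFunctionFinEquiv f : ℕ) (Fin.is_lt _) z hz
      rw [sum_groups hs Fs hFs] at h1
      rw [Pi.zero_apply, ← h1, Finset.sum_apply]
      refine Finset.sum_congr rfl fun a _ => ?_
      rw [Finset.sum_apply]
      refine Finset.sum_congr rfl fun b hb => ?_
      rw [hTapp]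
      have hb' := hBlt a b hb
      have e1 : ((a : ℕ) * s + b) / s = a := by
        rw [mul_comm, Nat.mul_add_div hs, Nat.div_eq_of_lt hb', add_zero]
      have e2 : ((a : ℕ) * s + b) % s = b := by
        rw [mul_comm, Nat.mul_add_mod, Nat.mod_eq_of_lt hb']
      rw [e1, e2])
  intro q hq j hj
  have hqlt := Finset.mem_range.mp (hFs hq)
  have hqm : q / s < m := Nat.div_lt_of_lt_mul (by rwa [mul_comm])
  have h1 := hmain ⟨q / s, hqm⟩ (Finset.mem_univ _) (q % s) (by
    simp only [B, Finset.mem_filter, Finset.mem_range]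
    exact ⟨Nat.mod_lt _ hs, by rwa [Nat.div_add_mod']⟩)
  simp only [Nat.div_add_mod'] at h1
  have h2 := congrArg (1 + opE ⟨q / s, hqm⟩ (q % s) : Module.End F ((Fin m → Fin s) → F)) h1
  rw [← Module.End.mul_apply, opE_inv, Module.End.one_apply, map_zero] at h2
  have h3 := congrFun h2 (finFunctionFinEquiv.symm ⟨j, hj⟩)
  simpa only [Equiv.apply_symm_apply, Pi.zero_apply] using h3

/-- with pairwise distinct `λ_i` satisfying the local constraints, the
code of Section 2.1 is an `(n,k,ℓ)` MDS array code: for every `r`-subset `Fs` of `[n]`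
the matrix `[H_{f₁} | ⋯ | H_{f_r}]` is invertible; equivalently, two codewords agreeing
outside `Fs` agree everywhere, so any `k` coordinates determine the codeword. -/
theorem statement2 (F : Type*) [Field F] [Fintype F] (n k d s ℓ r : ℕ)
    (hk : 1 ≤ k) (hkn : k < n) (hd₁ : k + 1 ≤ d) (hd₂ : d ≤ n - 1)
    (hs : s = d - k + 1) (hdiv : s ∣ n) (hℓ : ℓ = s ^ (n / s)) (hr : r = n - k)
    (lam : ℕ → F)
    (hdist : ∀ i < n * s, ∀ j < n * s, lam i = lam j → i = j)
    (hloc : LocalConstraints lam s s ℓ (n / s)) :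
    ∀ Fs : Finset ℕ, Fs ⊆ Finset.range n → Fs.card = r →
      (Hcat lam s s ℓ r (enum Fs)).det ≠ 0 ∧
      (∀ C C' : ℕ → ℕ → F, InCode lam s s ℓ r n C → InCode lam s s ℓ r n C' →
        (∀ m < n, m ∉ Fs → ∀ j < ℓ, C m j = C' m j) →
        ∀ m < n, ∀ j < ℓ, C m j = C' m j) := by
  have hs0 : 0 < s := by omega
  have hn : n / s * s = n := Nat.div_mul_cancel hdiv
  have hl : 0 < ℓ := by rw [hℓ]; exact Nat.pow_pos hs0
  intro Fs hFs hcard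
  have hinj : ∀ x : ℕ → ℕ → F, (∀ i < ℓ, ∀ z < Fs.card, ∑ q ∈ Fs, ∑ j ∈ Finset.range ℓ,
      Aent lam s s (q / s) (q % s) i j z * x q j = 0) → ∀ q ∈ Fs, ∀ j < ℓ, x q j = 0 := by
    intro x hx
    subst hℓ
    exact inj_main hs0 lam (by rwa [hn]) hloc Fs (by rwa [hn]) x hx
  refine ⟨?_, ?_⟩
  · rw [← hcard]
    exact (det_iff ℓ hl Fs (fun q i j z => Aent lam s s (q / s) (q % s) i j z)).mpr hinj
  · intro C C' hC hC' hag q hq j hj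
    by_cases hqF : q ∈ Fs
    · refine sub_eq_zero.mp (hinj (fun q j => C q j - C' q j) ?_ q hqF j hj)
      intro i hi z hz
      rw [hcard] at hz
      have hlt : i * r + z < ℓ * r := by
        calc i * r + z < i * r + r := by omega
          _ = (i + 1) * r := by ring
          _ ≤ _ := Nat.mul_le_mul_right _ hi
      have e1 : (i * r + z) / r = i := by
        rw [mul_comm, Nat.mul_add_div (by omega), Nat.div_eq_of_lt hz, add_zero]
      have e2 : (i * r + z) % r = z := by
        rw [mul_comm, Nat.mul_add_mod, Nat.mod_eq_of_lt hz]
      have h1 := hC _ hlt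
      have h2 := hC' _ hlt
      rw [e1, e2] at h1 h2
      have h3 := congrArg₂ (· - ·) h1 h2
      simp only [← Finset.sum_sub_distrib, ← mul_sub, sub_zero] at h3
      rw [← h3]
      refine Finset.sum_subset hFs fun q hq hqF => ?_
      refine Finset.sum_eq_zero fun j hj => ?_
      rw [hag q (Finset.mem_range.mp hq) hqF j (Finset.mem_range.mp hj), sub_self, mul_zero]
    · exact hag q hq hqF j hj
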